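/- Let a, b, b', c' be complex numbers with b and c' not nonpositive integers, and let x, y be real numbers with |x| + |y| < 1 such that |y/(1−x)| < 1. Then F₂(a; b, b'; b, c'; x, y) = (1−x)^{−a} · ₂F₁(a, b'; c'; y/(1−x)). -/

import Mathlib

noncomputable def poch (a : ℂ) (n : ℕ) : ℂ := ∏ i ∈ Finset.range n, (a + i)

/-- Gauss hypergeometric series ₂F₁(a,b;c;x). -/
noncomputable def hyp2F1 (a b c x : ℂ) : ℂ :=
  ∑' n : ℕ, poch a n * poch b n / (n.factorial * poch c n) * x ^ n

/-- Appell series F₂(a;b,b';c,c';x,y). -/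
noncomputable def appellF2 (a b b' c c' x y : ℂ) : ℂ :=
  ∑' p : ℕ × ℕ, poch a (p.1 + p.2) * poch b p.1 * poch b' p.2 /
    (p.1.factorial * p.2.factorial * poch c p.1 * poch c' p.2) * x ^ p.1 * y ^ p.2

lemma poch_succ (a : ℂ) (n : ℕ) : poch a (n + 1) = poch a n * (a + n) := by
  simp [poch, Finset.prod_range_succ]

lemma poch_add (a : ℂ) (n m : ℕ) : poch a (n + m) = poch a n * poch (a + n) m := by
  simp only [poch, Finset.prod_range_add]
  congr 1
  refine Finset.prod_congr rfl fun i _ => ?_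
  push_cast
  ring

lemma poch_ne_zero (a : ℂ) (h : ∀ n : ℕ, a ≠ -(n : ℂ)) (n : ℕ) : poch a n ≠ 0 := by
  refine Finset.prod_ne_zero_iff.mpr fun i _ h0 => h i ?_
  exact eq_neg_of_add_eq_zero_left h0

lemma poch_eq_smeval (a : ℂ) (n : ℕ) : (ascPochhammer ℕ n).smeval a = poch a n := by
  induction n with
  | zero => simp [poch]
  | succ n ih =>
    rw [ascPochhammer_succ_right, Polynomial.smeval_mul, ih, poch_succ]
    simp [Polynomial.smeval_add, Polynomial.smeval_natCast]

lemma choose_eq_poch (a : ℂ) (n : ℕ) :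
    Ring.choose (a + n - 1) n = poch a n / n.factorial := by
  have h := Ring.factorial_nsmul_multichoose_eq_ascPochhammer a n
  rw [poch_eq_smeval, Ring.multichoose_eq, nsmul_eq_mul] at h
  have : (n.factorial : ℂ) ≠ 0 := by exact_mod_cast n.factorial_ne_zero
  field_simp
  rw [← h]; ring

lemma hasSum_binom (a x : ℂ) (hx : ‖x‖ < 1) :
    HasSum (fun n : ℕ => poch a n / n.factorial * x ^ n) ((1 - x) ^ (-a)) := by
  have h := (Complex.one_div_one_sub_cpow_hasFPowerSeriesOnBall_zero a).hasSum
    (y := x) (by simpa [← ofReal_norm] using hx)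
  have e : (fun n : ℕ => poch a n / n.factorial * x ^ n) = fun n : ℕ =>
      (FormalMultilinearSeries.ofScalars ℂ (fun n : ℕ => Ring.choose (a + n - 1) n) n)
        fun _ => x := by
    funext n
    simp [choose_eq_poch, mul_comm]
  rw [Complex.cpow_neg, e]
  simpa only [zero_add, one_div] using h

noncomputable def rpoch (a : ℝ) (n : ℕ) : ℝ := ∏ i ∈ Finset.range n, (a + i)

lemma rpoch_nonneg (a : ℝ) (ha : 0 ≤ a) (n : ℕ) : 0 ≤ rpoch a n :=
  Finset.prod_nonneg fun i _ => by positivity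

lemma ofReal_rpoch (a : ℝ) (n : ℕ) : ((rpoch a n : ℝ) : ℂ) = poch a n := by
  simp [rpoch, poch]

lemma norm_poch_le (a : ℂ) (k n : ℕ) : ‖poch (a + k) n‖ ≤ rpoch (‖a‖ + k) n := by
  rw [poch, norm_prod, rpoch]
  refine Finset.prod_le_prod (fun _ _ => norm_nonneg _) fun i _ => ?_
  refine (norm_add_le _ _).trans ?_
  refine add_le_add ((norm_add_le _ _).trans ?_) ?_ <;> simp

lemma hasSum_rbinom (a x : ℝ) (hx : |x| < 1) :
    HasSum (fun n : ℕ => rpoch a n / n.factorial * x ^ n) ((1 - x) ^ (-a)) := by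
  have h := hasSum_binom a x (by simpa using hx)
  rw [← Complex.hasSum_ofReal]
  convert h using 1
  · funext n
    simp [ofReal_rpoch]
  · rw [Complex.ofReal_cpow (by linarith [le_abs_self x])]
    simp

noncomputable def gco (a b c : ℂ) (n : ℕ) : ℂ :=
  poch a n * poch b n / (n.factorial * poch c n)

lemma tendsto_shift_div (a : ℂ) :
    Filter.Tendsto (fun n : ℕ => (a + n) / ((n : ℂ) + 1)) Filter.atTop (nhds 1) := by
  have h : Filter.Tendsto (fun n : ℕ => 1 + (a - 1) * (1 / ((n : ℂ) + 1))) Filter.atTop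
      (nhds (1 + (a - 1) * 0)) :=
    ((tendsto_one_div_add_atTop_nhds_zero_nat (𝕜 := ℂ)).const_mul (a - 1)).const_add 1
  simp only [mul_zero, add_zero] at h
  refine h.congr fun n => ?_
  have : (n : ℂ) + 1 ≠ 0 := by exact_mod_cast n.succ_ne_zero
  field_simp
  ring

lemma summable_gco (a b c z : ℂ) (hc : ∀ n : ℕ, c ≠ -(n : ℂ)) (hz : ‖z‖ < 1) :
    Summable (fun n => ‖gco a b c n * z ^ n‖) := by
  obtain ⟨r, hr1, hr2⟩ := exists_between hz
  have hlim : Filter.Tendsto (fun n : ℕ => ‖(a + n) / ((n : ℂ) + 1) * ((b + n) / ((n : ℂ) + 1)) /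
      ((c + n) / ((n : ℂ) + 1)) * z‖) Filter.atTop (nhds ‖(1 : ℂ) * 1 / 1 * z‖) :=
    ((((tendsto_shift_div a).mul (tendsto_shift_div b)).div (tendsto_shift_div c)
      one_ne_zero).mul_const z).norm
  simp only [mul_one, div_one, one_mul] at hlim
  refine summable_of_ratio_norm_eventually_le hr2 ?_
  filter_upwards [hlim.eventually_le_const hr1] with n hn
  have h1 : (n : ℂ) + 1 ≠ 0 := by exact_mod_cast n.succ_ne_zero
  have h2 : c + n ≠ 0 := fun h => hc n (eq_neg_of_add_eq_zero_left h)
  have h3 := poch_ne_zero c hc n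
  have h4 : (n.factorial : ℂ) ≠ 0 := by exact_mod_cast n.factorial_ne_zero
  have key : gco a b c (n + 1) * z ^ (n + 1) = ((a + n) / ((n : ℂ) + 1) * ((b + n) / ((n : ℂ) + 1)) /
      ((c + n) / ((n : ℂ) + 1)) * z) * (gco a b c n * z ^ n) := by
    simp only [gco, poch_succ, Nat.factorial_succ, pow_succ]
    push_cast
    field_simp
  rw [norm_norm, norm_norm, key, norm_mul]
  exact mul_le_mul_of_nonneg_right hn (norm_nonneg _)

lemma summable_double (a b c : ℂ) (x y : ℝ) (hc : ∀ n : ℕ, c ≠ -(n : ℂ))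
    (hxy : |x| + |y| < 1) :
    Summable (fun p : ℕ × ℕ => gco a b c p.1 * (y : ℂ) ^ p.1 *
      (poch (a + p.1) p.2 / p.2.factorial * (x : ℂ) ^ p.2)) := by
  have hx : |x| < 1 := by linarith [abs_nonneg y]
  have hx0 : 0 < 1 - |x| := by linarith
  have hs : ∀ n : ℕ, HasSum (fun m : ℕ => ‖gco a b c n * (y : ℂ) ^ n‖ *
      (rpoch (‖a‖ + n) m / m.factorial * |x| ^ m))
      (‖gco a b c n * (y : ℂ) ^ n‖ * (1 - |x|) ^ (-(‖a‖ + n))) := fun n =>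
    (hasSum_rbinom (‖a‖ + n) |x| (by simpa using hx)).mul_left _
  have hr : ∀ n m : ℕ, 0 ≤ rpoch (‖a‖ + n) m := fun n m => rpoch_nonneg _ (by positivity) m
  refine Summable.of_norm_bounded (g := fun p : ℕ × ℕ => ‖gco a b c p.1 * (y : ℂ) ^ p.1‖ *
      (rpoch (‖a‖ + p.1) p.2 / p.2.factorial * |x| ^ p.2)) ?_ ?_
  · rw [summable_prod_of_nonneg]
    · refine ⟨fun n => (hs n).summable, ?_⟩
      simp only [fun n => (hs n).tsum_eq]
      have hz : ‖((y / (1 - |x|) : ℝ) : ℂ)‖ < 1 := by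
        rw [Complex.norm_real, Real.norm_eq_abs, abs_div, abs_of_pos hx0, div_lt_one hx0]
        linarith
      refine ((summable_gco a b c _ hc hz).mul_left ((1 - |x|) ^ (-‖a‖))).congr fun n => ?_
      rw [neg_add, Real.rpow_add hx0, Real.rpow_neg hx0.le (n : ℝ), Real.rpow_natCast]
      rw [norm_mul, norm_mul, norm_pow, norm_pow, Complex.norm_real, Complex.norm_real,
        Real.norm_eq_abs, Real.norm_eq_abs, abs_div, abs_of_pos hx0, div_pow]
      ring
    · intro p
      have := hr p.1 p.2
      simp only [Pi.zero_apply]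
      positivity
  · intro p
    rw [norm_mul]
    refine mul_le_mul_of_nonneg_left ?_ (norm_nonneg _)
    rw [norm_mul, norm_div, norm_pow, Complex.norm_real, Complex.norm_natCast, Real.norm_eq_abs]
    gcongr
    exact norm_poch_le a p.1 p.2

theorem appellF2_reduction_c_eq_b (a b b' c' : ℂ) (x y : ℝ)
    (hb : ∀ n : ℕ, b ≠ -(n : ℂ)) (hc' : ∀ n : ℕ, c' ≠ -(n : ℂ))
    (hxy : |x| + |y| < 1) (hy' : |y / (1 - x)| < 1) :
    appellF2 a b b' b c' x y =
      ((1 : ℂ) - x) ^ (-a) * hyp2F1 a b' c' ((y : ℂ) / (1 - x)) := by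
  have hx : |x| < 1 := by linarith [abs_nonneg y]
  have hx1 : (1 : ℂ) - x ≠ 0 := by
    have : (1 : ℝ) - x ≠ 0 := by linarith [le_abs_self x]
    exact_mod_cast this
  have hsum := (summable_double a b' c' x y hc' hxy).hasSum
  have hfib := hsum.prod_fiberwise fun n =>
    (hasSum_binom (a + n) x (by simpa using hx)).mul_left (gco a b' c' n * (y : ℂ) ^ n)
  rw [appellF2, hyp2F1, ← tsum_mul_left, ← (Equiv.prodComm ℕ ℕ).tsum_eq]
  refine Eq.trans (tsum_congr fun p => ?_) (hfib.tsum_eq.symm.trans (tsum_congr fun n => ?_))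
  · have h1 := poch_ne_zero b hb p.2
    have h2 := poch_ne_zero c' hc' p.1
    simp only [Equiv.prodComm_apply, Prod.fst_swap, Prod.snd_swap, gco]
    rw [add_comm p.2 p.1, poch_add]
    field_simp
  · rw [neg_add, Complex.cpow_add _ _ hx1, Complex.cpow_neg _ (n : ℂ), Complex.cpow_natCast,
      div_pow, gco]
    ring
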